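/- Let G be a normal subgroup of a group Π and let Q = Π/G. If Q is a cut-group and no nontrivial element of G is simultaneously a torsion element and an element with only finitely many conjugates in Π (i.e. G ∩ Φ⁺(Π) = {1}), then Π is a cut-group. -/

import Mathlib

/-- A group `G` is a *cut-group* if every central unit of the integral group ring `ℤ[G]`
is trivial, i.e. of the form `±g` for some `g ∈ G`. -/
def IsCutGroup (G : Type*) [Group G] : Prop :=
  ∀ u : (MonoidAlgebra ℤ G)ˣ,
    (u : MonoidAlgebra ℤ G) ∈ Subring.center (MonoidAlgebra ℤ G) →
    ∃ g : G, (u : MonoidAlgebra ℤ G) = MonoidAlgebra.of ℤ G g ∨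
      (u : MonoidAlgebra ℤ G) = -(MonoidAlgebra.of ℤ G g)

/-- `Φ⁺(G)`: the set of torsion elements of `G` having only finitely many conjugates
in `G` (the torsion part of the FC-subgroup of `G`). -/
def FCTorsion (G : Type*) [Group G] : Set G :=
  {g : G | {h : G | IsConj g h}.Finite ∧ IsOfFinOrder g}

/-!
Let `u` be a central unit of `ℤ[Γ]`. It suffices that `g h⁻¹ ∈ Φ⁺(Γ)` for all `g`, `h` in the
support of `u`: then `Γ → Γ ⧸ G` is injective on this support, and `u` is trivial because its image
is.

The elements of the support of `u` and `u⁻¹` have finitely many conjugates, so the subgroup `H` they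
generate has a center of finite index. The transfer `H → Z(H)` modulo torsion grades the center of
`ℤ[H]` by a torsion-free abelian group. Let `tr x` be the coefficient of `1` in `x` and `x*` the
image of `x` under `g ↦ g⁻¹`. The center is reduced because `tr (x x*) = ∑ g, x_g ^ 2`, and it has
only the trivial idempotents because the trace of an idempotent is an integer between `0` and `1`;
hence its units are homogeneous. So `g h⁻¹` lies in the kernel of `H → Z(H) / torsion`, which
consists of torsion elements.
-/

open MonoidAlgebra Subgroup

namespace GroupRing

section Units

variable {R A : Type*}

lemma card_support_mul_card_support_le_one [Semiring R] [NoZeroDivisors R] [MulOneClass A]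
    [TwoUniqueProds A] {x y : R[A]} (hxy : x * y = 1) :
    x.coeff.support.card * y.coeff.support.card ≤ 1 := by
  classical
  by_contra! hcard
  have mul_eq_one_of_uniqueMul {p : A × A} (hp : p ∈ x.coeff.support ×ˢ y.coeff.support)
      (hunique : UniqueMul x.coeff.support y.coeff.support p.1 p.2) : p.1 * p.2 = 1 := by
    rw [Finset.mem_product, Finsupp.mem_support_iff, Finsupp.mem_support_iff] at hp
    by_contra hne
    have hcoeff := coeff_mul_mul_of_uniqueMul hunique
    rw [hxy, one_def, coeff_single, Finsupp.single_eq_of_ne hne] at hcoeff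
    exact mul_ne_zero hp.1 hp.2 hcoeff.symm
  obtain ⟨p, hp, q, hq, hpq, hp_unique, hq_unique⟩ := TwoUniqueProds.uniqueMul_of_one_lt_card hcard
  have hmul : q.1 * q.2 = p.1 * p.2 :=
    (mul_eq_one_of_uniqueMul hq hq_unique).trans (mul_eq_one_of_uniqueMul hp hp_unique).symm
  have hqp := hp_unique (Finset.mem_product.mp hq).1 (Finset.mem_product.mp hq).2 hmul
  exact hpq (Prod.ext hqp.1.symm hqp.2.symm)

lemma coeff_mul_coeff_eq_zero_of_noZeroDivisors [Semiring R] [NoZeroDivisors R] [MulOneClass A]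
    [TwoUniqueProds A] {x y : R[A]} (hxy : x * y = 1) {a b : A} (hab : a * b ≠ 1) :
    x.coeff a * y.coeff b = 0 := by
  by_contra hne
  have ha := Finsupp.mem_support_iff.mpr (left_ne_zero_of_mul hne)
  have hb := Finsupp.mem_support_iff.mpr (right_ne_zero_of_mul hne)
  have hcard := card_support_mul_card_support_le_one hxy
  have hx : x.coeff.support.card ≤ 1 :=
    (Nat.le_mul_of_pos_right _ (Finset.card_pos.mpr ⟨b, hb⟩)).trans hcard
  have hy : y.coeff.support.card ≤ 1 :=
    (Nat.le_mul_of_pos_left _ (Finset.card_pos.mpr ⟨a, ha⟩)).trans hcard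
  have hcoeff : (x * y).coeff (a * b) = x.coeff a * y.coeff b :=
    coeff_mul_mul_of_uniqueMul fun _ _ hx' hy' _ =>
      ⟨Finset.card_le_one.mp hx _ hx' _ ha, Finset.card_le_one.mp hy _ hy' _ hb⟩
  rw [hxy, one_def, coeff_single, Finsupp.single_eq_of_ne hab] at hcoeff
  exact hne hcoeff.symm

lemma coeff_mul_coeff_eq_zero [CommRing R] [IsReduced R] [Monoid A] [TwoUniqueProds A]
    {x y : R[A]} (hxy : x * y = 1) {a b : A} (hab : a * b ≠ 1) :
    x.coeff a * y.coeff b = 0 := by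
  rw [← isNilpotent_iff_eq_zero, nilpotent_iff_mem_prime]
  intro P _
  let π := mapRingHom A (Ideal.Quotient.mk P)
  have hπ : π x * π y = 1 := by rw [← map_mul, hxy, map_one]
  have hzero := coeff_mul_coeff_eq_zero_of_noZeroDivisors hπ hab
  rwa [coeff_mapRingHom, coeff_mapRingHom, ← map_mul, Ideal.Quotient.eq_zero_iff_mem] at hzero

theorem exists_eq_single [CommRing R] [IsReduced R] [Group A] [TwoUniqueProds A]
    (hidem : ∀ e : R, IsIdempotentElem e → e = 0 ∨ e = 1) (u : R[A]ˣ) :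
    ∃ a r, (u : R[A]) = single a r := by
  cases subsingleton_or_nontrivial R
  · exact ⟨1, 0, Subsingleton.elim _ _⟩
  have hzero {a b : A} (hab : a ≠ b) :
      (u : R[A]).coeff a * (u⁻¹ : R[A]ˣ).val.coeff b⁻¹ = 0 :=
    coeff_mul_coeff_eq_zero u.mul_inv (mul_inv_eq_one.not.mpr hab)
  -- The `e a` are orthogonal idempotents with sum `1`, so exactly one of them is nonzero.
  let e (a : (u : R[A]).coeff.support) : R :=
    (u : R[A]).coeff a * (u⁻¹ : R[A]ˣ).val.coeff (a : A)⁻¹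
  have hortho : Pairwise (e · * e · = 0) := by
    intro a b hab
    calc e a * e b = (u : R[A]).coeff a * (u⁻¹ : R[A]ˣ).val.coeff (b : A)⁻¹ *
          ((u⁻¹ : R[A]ˣ).val.coeff (a : A)⁻¹ * (u : R[A]).coeff b) := by simp only [e]; ring
      _ = 0 := by rw [hzero (Subtype.coe_ne_coe.mpr hab), zero_mul]
  have hsum : ∑ a, e a = 1 := by
    rw [Finset.sum_coe_sort _ fun a => (u : R[A]).coeff a * (u⁻¹ : R[A]ˣ).val.coeff a⁻¹]
    have hone : ((u : R[A]) * (u⁻¹ : R[A]ˣ).val).coeff 1 = 1 := by rw [u.mul_inv, coeff_one_one]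
    simpa only [coeff_mul_apply_left, Finsupp.sum, mul_one] using hone
  have hcomplete := CompleteOrthogonalIdempotents.iff_ortho_complete.mpr ⟨hortho, hsum⟩
  obtain ⟨a, -, ha⟩ := Finset.exists_ne_zero_of_sum_ne_zero (hsum ▸ one_ne_zero)
  have ha1 : e a = 1 := (hidem _ (hcomplete.idem a)).resolve_left ha
  refine ⟨a, (u : R[A]).coeff a, ?_⟩
  ext b
  rw [coeff_single]
  obtain rfl | hb := eq_or_ne b a
  · rw [Finsupp.single_eq_same]
  rw [Finsupp.single_eq_of_ne hb]
  calc (u : R[A]).coeff b = (u : R[A]).coeff b * e a := by rw [ha1, mul_one]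
    _ = (u : R[A]).coeff b * (u⁻¹ : R[A]ˣ).val.coeff (a : A)⁻¹ * (u : R[A]).coeff a := by
        simp only [e]; ring
    _ = 0 := by rw [hzero hb, zero_mul]

end Units

section Involution

lemma eq_zero_of_mul_self_eq_zero {R : Type*} [NonUnitalSemiring R] [StarRing R]
    (hproper : ∀ x : R, x * star x = 0 → x = 0) {x : R} [IsStarNormal x] (hx : x * x = 0) :
    x = 0 := by
  have hcomm : star x * x = x * star x := star_comm_self
  refine hproper x (hproper _ ?_)
  calc x * star x * star (x * star x) = x * (star x * x) * star x := by
        simp only [star_mul, star_star, mul_assoc]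
    _ = x * x * (star x * star x) := by rw [hcomm]; simp only [mul_assoc]
    _ = 0 := by rw [hx, zero_mul]

lemma isStarProjection_of_isIdempotentElem {R : Type*} [NonUnitalRing R] [StarRing R]
    (hproper : ∀ x : R, x * star x = 0 → x = 0) {e : R} [IsStarNormal e]
    (he : IsIdempotentElem e) : IsStarProjection e := by
  have hcomm : Commute e (star e) := star_comm_self.symm
  have hself : IsSelfAdjoint (e * star e) := .mul_star_self e
  have hproj : IsIdempotentElem (e * star e) := he.mul_of_commute hcomm he.star
  have hl : e * (e * star e) = e * star e := by rw [← mul_assoc, he.eq]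
  have hr : e * star e * star e = e * star e := by rw [mul_assoc, he.star.eq]
  have heq : e = e * star e := by
    rw [← sub_eq_zero]
    apply hproper
    rw [star_sub, hself.star_eq, sub_mul, mul_sub, mul_sub, hl, hr, hproj.eq, sub_self]
  exact ⟨he, heq ▸ hself⟩

lemma isStarNormal_of_mem_center {R : Type*} [Ring R] [StarRing R] {x : R}
    (hx : x ∈ Subring.center R) : IsStarNormal x :=
  ⟨Subring.mem_center_iff.mp hx (star x)⟩

variable {R G : Type*} [Group G]

/-- The canonical involution `∑ r_g g ↦ ∑ r_g g⁻¹` of a group ring; it acts trivially on the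
coefficients, which is why they are commutative. -/
noncomputable local instance [CommSemiring R] : StarRing R[G] where
  star := mapDomain (·⁻¹)
  star_involutive x := by
    induction x using MonoidAlgebra.induction_linear with
    | zero => simp
    | add x y hx hy => simp only [mapDomain_add, hx, hy]
    | single g r => simp
  star_mul x y := by
    induction x using MonoidAlgebra.induction_linear with
    | zero => simp
    | add x x' hx hx' => simp only [add_mul, mul_add, mapDomain_add, hx, hx']
    | single g r =>
      induction y using MonoidAlgebra.induction_linear with
      | zero => simp
      | add y y' hy hy' => simp only [add_mul, mul_add, mapDomain_add, hy, hy']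
      | single h s => simp [mul_comm r s]
  star_add := mapDomain_add _

lemma coeff_star [CommSemiring R] (x : R[G]) (g : G) : (star x).coeff g = x.coeff g⁻¹ := by
  have h := Finsupp.mapDomain_apply inv_injective x.coeff g⁻¹
  rwa [inv_inv] at h

lemma coeff_one_mul_star [CommSemiring R] (x : R[G]) :
    (x * star x).coeff 1 = ∑ g ∈ x.coeff.support, x.coeff g ^ 2 := by
  simp [coeff_mul_apply_left, coeff_star, Finsupp.sum, sq]

section Ordered

variable [CommRing R] [LinearOrder R] [IsStrictOrderedRing R]

lemma eq_zero_of_coeff_one_mul_star_eq_zero {x : R[G]} (hx : (x * star x).coeff 1 = 0) :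
    x = 0 := by
  rw [coeff_one_mul_star, Finset.sum_eq_zero_iff_of_nonneg fun _ _ => sq_nonneg _] at hx
  ext g
  by_contra hg
  exact hg (pow_eq_zero_iff two_ne_zero |>.mp (hx g (Finsupp.mem_support_iff.mpr hg)))

lemma eq_zero_of_mul_star_eq_zero (x : R[G]) (hx : x * star x = 0) : x = 0 :=
  eq_zero_of_coeff_one_mul_star_eq_zero (by rw [hx]; rfl)

instance isReduced_center : IsReduced (Subring.center R[G]) := by
  rw [isReduced_iff_pow_one_lt 2 one_lt_two]
  rintro ⟨x, hx⟩ hsq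
  have := isStarNormal_of_mem_center hx
  have hmul : x * x = 0 := by simpa [sq] using congrArg Subtype.val hsq
  exact Subtype.ext (eq_zero_of_mul_self_eq_zero eq_zero_of_mul_star_eq_zero hmul)

lemma eq_zero_of_isStarProjection {e : R[G]} (he : IsStarProjection e) (h1 : e.coeff 1 = 0) :
    e = 0 := by
  apply eq_zero_of_coeff_one_mul_star_eq_zero
  rw [he.isSelfAdjoint.star_eq, he.isIdempotentElem.eq, h1]

lemma sq_coeff_one_le_of_isStarProjection {e : R[G]} (he : IsStarProjection e) :
    e.coeff 1 ^ 2 ≤ e.coeff 1 := by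
  have hsum : e.coeff 1 = ∑ g ∈ e.coeff.support, e.coeff g ^ 2 := by
    rw [← coeff_one_mul_star, he.isSelfAdjoint.star_eq, he.isIdempotentElem.eq]
  by_cases h1 : e.coeff 1 = 0
  · simp [h1]
  · conv_rhs => rw [hsum]
    exact Finset.single_le_sum (f := fun g => e.coeff g ^ 2) (fun _ _ => sq_nonneg _)
      (Finsupp.mem_support_iff.mpr h1)

end Ordered

lemma eq_zero_or_one_of_isStarProjection {e : ℤ[G]} (he : IsStarProjection e) :
    e = 0 ∨ e = 1 := by
  have hsq := sq_coeff_one_le_of_isStarProjection he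
  have hcoeff : e.coeff 1 = 0 ∨ e.coeff 1 = 1 := by
    have h0 : 0 ≤ e.coeff 1 := (sq_nonneg _).trans hsq
    have h1 : e.coeff 1 ≤ 1 := by nlinarith
    omega
  refine hcoeff.imp (eq_zero_of_isStarProjection he) fun h1 => ?_
  have hcompl : (1 - e).coeff 1 = 0 := by simp [h1]
  exact (sub_eq_zero.mp (eq_zero_of_isStarProjection he.one_sub hcompl)).symm

lemma eq_zero_or_one_of_isIdempotentElem_center {e : Subring.center ℤ[G]}
    (he : IsIdempotentElem e) : e = 0 ∨ e = 1 := by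
  have := isStarNormal_of_mem_center e.2
  have hproj : IsStarProjection (e : ℤ[G]) :=
    isStarProjection_of_isIdempotentElem eq_zero_of_mul_star_eq_zero (congrArg Subtype.val he)
  exact (eq_zero_or_one_of_isStarProjection hproj).imp Subtype.ext Subtype.ext

end Involution

section Center

variable {R G : Type*} [CommRing R] [Group G]

lemma mem_center_iff_coeff_conj {x : R[G]} :
    x ∈ Subring.center R[G] ↔ ∀ g h : G, x.coeff (g * h * g⁻¹) = x.coeff h := by
  rw [Subring.mem_center_iff]
  constructor
  · intro hx g h
    have hcomm := congrArg (fun y : R[G] => y.coeff (g * h)) (hx (single g 1))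
    simpa [coeff_mul_single_apply, coeff_single_mul_apply] using hcomm.symm
  · intro hx y
    induction y using MonoidAlgebra.induction_linear with
    | zero => simp
    | add a b ha hb => rw [add_mul, mul_add, ha, hb]
    | single g r =>
      ext h
      rw [coeff_mul_single_apply, coeff_single_mul_apply, mul_comm, ← hx g (g⁻¹ * h)]
      simp

lemma map_mem_center_of_surjective {S T : Type*} [Ring S] [Ring T] {f : S →+* T}
    (hf : Function.Surjective f) {x : S} (hx : x ∈ Subring.center S) :
    f x ∈ Subring.center T := by
  rw [Subring.mem_center_iff] at hx ⊢
  intro y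
  obtain ⟨y, rfl⟩ := hf y
  rw [← map_mul, ← map_mul, hx]

lemma mem_center_of_map_mem_center {S T : Type*} [Ring S] [Ring T] {f : S →+* T}
    (hf : Function.Injective f) {x : S} (hx : f x ∈ Subring.center T) :
    x ∈ Subring.center S := by
  rw [Subring.mem_center_iff] at hx ⊢
  intro y
  apply hf
  rw [map_mul, map_mul, hx]

lemma exists_unitsMap_eq {M N : Type*} [Monoid M] [Monoid N] {f : M →* N}
    (hf : Function.Injective f) {u : Nˣ} (hu : (u : N) ∈ Set.range f)
    (hu_inv : (u⁻¹ : Nˣ).val ∈ Set.range f) : ∃ v : Mˣ, Units.map f v = u := by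
  obtain ⟨x, hx⟩ := hu
  obtain ⟨y, hy⟩ := hu_inv
  have hxy : x * y = 1 := hf (by rw [map_mul, hx, hy, u.mul_inv, map_one])
  have hyx : y * x = 1 := hf (by rw [map_mul, hx, hy, u.inv_mul, map_one])
  exact ⟨⟨x, y, hxy, hyx⟩, Units.ext hx⟩

end Center

section Coaction

variable {R H A : Type*} [Group H]

/-- The coaction `∑ r_h h ↦ ∑ (r_h h) φ(h)` of `A` on the group ring of `H` induced by a
homomorphism `φ : H → A`. The `a`-coefficient of the image of `x` is the part of `x` supported on
the fibre `φ⁻¹(a)`, so this records the `A`-grading of `R[H]`. -/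
noncomputable def coaction [Semiring R] [Monoid A] (φ : H →* A) : R[H] →+* R[H][A] :=
  (curryRingEquiv : R[A × H] ≃+* R[H][A]).toRingHom.comp
    (mapDomainRingHom R (φ.prod (MonoidHom.id H)))

lemma coeff_coaction [Semiring R] [Monoid A] [DecidableEq A] (φ : H →* A) (x : R[H]) (a : A)
    (h : H) : ((coaction φ x).coeff a).coeff h = if φ h = a then x.coeff h else 0 := by
  have hcurry : ((coaction φ x).coeff a).coeff h =
      Finsupp.mapDomain (φ.prod (MonoidHom.id H)) x.coeff (a, h) := rfl
  rw [hcurry]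
  split_ifs with ha
  · subst ha
    exact Finsupp.mapDomain_apply (fun _ _ hxy => congrArg Prod.snd hxy) x.coeff h
  · refine Finsupp.mapDomain_of_notMem_range _ _ ?_
    rintro ⟨g, hg⟩
    obtain ⟨rfl, rfl⟩ := Prod.mk.inj hg
    exact ha rfl

variable [CommRing R] [CommGroup A]

lemma coeff_coaction_mem_center (φ : H →* A) {x : R[H]} (hx : x ∈ Subring.center R[H]) (a : A) :
    (coaction φ x).coeff a ∈ Subring.center R[H] := by
  classical
  rw [mem_center_iff_coeff_conj] at hx ⊢
  intro g h
  rw [coeff_coaction, coeff_coaction, hx, map_mul, map_mul, map_inv, mul_inv_cancel_comm]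

lemma coaction_mem_range_map_center (φ : H →* A) {x : R[H]} (hx : x ∈ Subring.center R[H]) :
    coaction φ x ∈ Set.range (mapRingHom A (Subring.center R[H]).subtype) := by
  rw [coe_mapRingHom, range_map]
  exact fun a => ⟨⟨_, coeff_coaction_mem_center φ hx a⟩, rfl⟩

theorem exists_map_eq_of_coeff_ne_zero [IsReduced (Subring.center R[H])] [TwoUniqueProds A]
    (hidem : ∀ e : Subring.center R[H], IsIdempotentElem e → e = 0 ∨ e = 1) (φ : H →* A)
    {u : R[H]ˣ} (hu : (u : R[H]) ∈ Subring.center R[H]) :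
    ∃ a, ∀ h, (u : R[H]).coeff h ≠ 0 → φ h = a := by
  classical
  let ι := mapRingHom A (Subring.center R[H]).subtype
  have hι : Function.Injective ι := map_injective _ Subtype.val_injective
  obtain ⟨v, hv⟩ := exists_unitsMap_eq (f := (ι : _ →* R[H][A])) hι
    (u := Units.map (coaction φ : R[H] →+* R[H][A]) u)
    (coaction_mem_range_map_center φ hu)
    (by rw [← map_inv]; exact coaction_mem_range_map_center φ (Set.units_inv_mem_center hu))
  obtain ⟨a, z, hvz⟩ := exists_eq_single hidem v
  have hsingle : coaction φ (u : R[H]) = single a (z : R[H]) := by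
    have hιv : ι v = coaction φ (u : R[H]) := congrArg Units.val hv
    rw [← hιv, hvz, mapRingHom_single, Subring.subtype_apply]
  refine ⟨a, fun h => not_imp_comm.mp fun hne => ?_⟩
  calc (u : R[H]).coeff h = ((coaction φ (u : R[H])).coeff (φ h)).coeff h := by
        rw [coeff_coaction, if_pos rfl]
    _ = 0 := by rw [hsingle, coeff_single, Finsupp.single_eq_of_ne hne]; rfl

end Coaction

section FiniteConjugates

variable {G : Type*} [Group G]

open scoped Pointwise in
lemma finite_conjugatesOf_mul_inv {g h : G} (hg : (conjugatesOf g).Finite)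
    (hh : (conjugatesOf h).Finite) : (conjugatesOf (g * h⁻¹)).Finite := by
  refine (hg.mul hh.inv).subset fun x hx => ?_
  obtain ⟨c, rfl⟩ := isConj_iff.mp hx
  refine ⟨c * g * c⁻¹, isConj_iff.mpr ⟨c, rfl⟩, c * h⁻¹ * c⁻¹, ?_, by group⟩
  exact isConj_iff.mpr ⟨c, by group⟩

lemma finiteIndex_centralizer_singleton {g : G} (hg : (conjugatesOf g).Finite) :
    (centralizer {g}).FiniteIndex := by
  have horbit : MulAction.orbit (ConjAct G) g = conjugatesOf g := by
    ext h
    exact ConjAct.mem_orbit_conjAct.trans isConj_comm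
  have hindex : (centralizer {g}).index = (MulAction.stabilizer (ConjAct G) g).index := by
    rw [centralizer_eq_comap_stabilizer]
    exact index_comap_of_surjective _ ConjAct.toConjAct.surjective
  constructor
  rw [hindex, MulAction.index_stabilizer, horbit]
  exact ((Set.ncard_pos hg).mpr ⟨g, mem_conjugatesOf_self⟩).ne'

lemma finiteIndex_center_closure {S : Set G} (hS : S.Finite)
    (hconj : ∀ s ∈ S, (conjugatesOf s).Finite) : (center (closure S)).FiniteIndex := by
  have : Finite ((↑) ⁻¹' S : Set (closure S)) := hS.preimage Subtype.val_injective.injOn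
  rw [center_eq_infi' closure_closure_coe_preimage]
  refine finiteIndex_iInf fun s => finiteIndex_centralizer_singleton ?_
  refine ((hconj _ s.2).preimage Subtype.val_injective.injOn).subset fun h hh => ?_
  exact (closure S).subtype.map_isConj hh

open scoped IsMulCommutative in
/-- The homomorphism `G → Z(G) / torsion` induced by the transfer `g ↦ g ^ [G : Z(G)]`: a
grading of `G` by a torsion-free abelian group whose kernel is torsion. -/
noncomputable def transferCenterModTorsion (G : Type*) [Group G] [(center G).FiniteIndex] :
    G →* center G ⧸ CommGroup.torsion (center G) :=
  (QuotientGroup.mk' _).comp (MonoidHom.transferCenterPow G)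

lemma isOfFinOrder_of_transferCenterModTorsion_eq_one [(center G).FiniteIndex] {g : G}
    (hg : transferCenterModTorsion G g = 1) : IsOfFinOrder g := by
  have htorsion : IsOfFinOrder (MonoidHom.transferCenterPow G g) :=
    (QuotientGroup.eq_one_iff _).mp hg
  have hpow : IsOfFinOrder (g ^ (center G).index) :=
    (center G).subtype.isOfFinOrder htorsion
  exact hpow.of_pow FiniteIndex.index_ne_zero

open scoped IsMulCommutative in
lemma twoUniqueProds_center_quotient_torsion [Group.FG G] [(center G).FiniteIndex] :
    TwoUniqueProds (center G ⧸ CommGroup.torsion (center G)) :=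
  have : Monoid.FG (center G ⧸ CommGroup.torsion (center G)) :=
    Group.fg_iff_monoid_fg.mp inferInstance
  inferInstance

end FiniteConjugates

section Support

variable {R G : Type*}

lemma finite_conjugatesOf_of_coeff_ne_zero [CommRing R] [Group G] {x : R[G]}
    (hx : x ∈ Subring.center R[G]) {g : G} (hg : x.coeff g ≠ 0) : (conjugatesOf g).Finite := by
  refine x.coeff.support.finite_toSet.subset fun h hh => ?_
  obtain ⟨c, rfl⟩ := isConj_iff.mp hh
  simpa [mem_center_iff_coeff_conj.mp hx] using hg

lemma mem_range_mapDomainRingHom_subtype [Semiring R] [Group G] {H : Subgroup G} {x : R[G]}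
    (hx : ∀ g, x.coeff g ≠ 0 → g ∈ H) : x ∈ Set.range (mapDomainRingHom R H.subtype) := by
  refine ⟨comapDomain H.subtype H.subtype_injective x, mapDomain_comapDomain ?_ _⟩
  intro g hg
  exact ⟨⟨g, hx g (Finsupp.mem_support_iff.mp hg)⟩, rfl⟩

lemma mapDomain_surjective [Semiring R] {M N : Type*} {f : M → N} (hf : Function.Surjective f) :
    Function.Surjective (mapDomain f : R[M] → R[N]) := by
  intro y
  obtain ⟨x, hx⟩ := Finsupp.mapDomain_surjective hf y.coeff
  exact ⟨ofCoeff x, coeff_injective hx⟩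

lemma exists_eq_single_of_mapDomain_eq_single [Semiring R] {M N : Type*} {f : M → N} {x : R[M]}
    (hf : Set.InjOn f x.coeff.support) {n : N} {r : R} (hr : r ≠ 0)
    (hx : mapDomain f x = single n r) : ∃ m, x = single m r := by
  classical
  have hx' : Finsupp.mapDomain f x.coeff = Finsupp.single n r := congrArg coeff hx
  have himage : x.coeff.support.image f = {n} := by
    rw [← Finsupp.mapDomain_support_of_injOn _ hf, hx', Finsupp.support_single _ hr]
  obtain ⟨m, hm, rfl⟩ : ∃ m ∈ x.coeff.support, f m = n := by
    rw [← Finset.mem_image, himage, Finset.mem_singleton]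
  refine ⟨m, coeff_injective (Finsupp.mapDomain_injOn _ hf (Set.Subset.refl _) ?_ ?_)⟩
  · exact (Finset.coe_subset.mpr Finsupp.support_single_subset).trans (by simpa using hm)
  · rw [hx', coeff_single, Finsupp.mapDomain_single]

end Support

section FCTorsion

lemma isOfFinOrder_mul_inv_of_coeff_ne_zero {H : Type*} [Group H] [Group.FG H]
    [(center H).FiniteIndex] {u : ℤ[H]ˣ} (hu : (u : ℤ[H]) ∈ Subring.center ℤ[H]) {g h : H}
    (hg : (u : ℤ[H]).coeff g ≠ 0) (hh : (u : ℤ[H]).coeff h ≠ 0) : IsOfFinOrder (g * h⁻¹) := by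
  have := twoUniqueProds_center_quotient_torsion (G := H)
  obtain ⟨a, ha⟩ := exists_map_eq_of_coeff_ne_zero
    (fun _ => eq_zero_or_one_of_isIdempotentElem_center) (transferCenterModTorsion H) hu
  apply isOfFinOrder_of_transferCenterModTorsion_eq_one
  rw [map_mul, map_inv, ha g hg, ha h hh, mul_inv_cancel]

variable {G : Type*} [Group G]

lemma exists_unitsMap_mapDomainRingHom_subtype_eq {R : Type*} [CommRing R] {u : R[G]ˣ}
    (hu : (u : R[G]) ∈ Subring.center R[G]) :
    ∃ H : Subgroup G, Group.FG H ∧ (center H).FiniteIndex ∧ ∃ v : R[H]ˣ,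
      (v : R[H]) ∈ Subring.center R[H] ∧ Units.map (mapDomainRingHom R H.subtype) v = u := by
  classical
  let S : Finset G := (u : R[G]).coeff.support ∪ (u⁻¹ : R[G]ˣ).val.coeff.support
  have hS : ∀ s ∈ (S : Set G), (conjugatesOf s).Finite := by
    intro s hs
    rcases Finset.mem_union.mp (Finset.mem_coe.mp hs) with hs | hs
    · exact finite_conjugatesOf_of_coeff_ne_zero hu (Finsupp.mem_support_iff.mp hs)
    · exact finite_conjugatesOf_of_coeff_ne_zero (Set.units_inv_mem_center hu)
        (Finsupp.mem_support_iff.mp hs)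
  let H := closure (S : Set G)
  have hinj : Function.Injective (mapDomainRingHom R H.subtype) :=
    mapDomain_injective H.subtype_injective
  obtain ⟨v, hv⟩ := exists_unitsMap_eq (f := (mapDomainRingHom R H.subtype : R[H] →* R[G]))
    hinj (u := u)
    (mem_range_mapDomainRingHom_subtype fun _ hg => subset_closure
      (Finset.mem_union_left _ (Finsupp.mem_support_iff.mpr hg)))
    (mem_range_mapDomainRingHom_subtype fun _ hg => subset_closure
      (Finset.mem_union_right _ (Finsupp.mem_support_iff.mpr hg)))
  refine ⟨H, Group.closure_finset_fg S, finiteIndex_center_closure S.finite_toSet hS, v, ?_, hv⟩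
  exact mem_center_of_map_mem_center hinj (by rwa [← hv] at hu)

theorem mul_inv_mem_FCTorsion {u : ℤ[G]ˣ} (hu : (u : ℤ[G]) ∈ Subring.center ℤ[G]) {g h : G}
    (hg : (u : ℤ[G]).coeff g ≠ 0) (hh : (u : ℤ[G]).coeff h ≠ 0) : g * h⁻¹ ∈ FCTorsion G := by
  refine ⟨finite_conjugatesOf_mul_inv (finite_conjugatesOf_of_coeff_ne_zero hu hg)
    (finite_conjugatesOf_of_coeff_ne_zero hu hh), ?_⟩
  classical
  obtain ⟨H, _, _, v, hv, rfl⟩ := exists_unitsMap_mapDomainRingHom_subtype_eq hu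
  have lift_mem_support {k : G} (hk : (mapDomain H.subtype (v : ℤ[H])).coeff k ≠ 0) :
      ∃ k' : H, (v : ℤ[H]).coeff k' ≠ 0 ∧ H.subtype k' = k := by
    obtain ⟨k', hk', rfl⟩ :=
      Finset.mem_image.mp (Finsupp.mapDomain_support (Finsupp.mem_support_iff.mpr hk))
    exact ⟨k', Finsupp.mem_support_iff.mp hk', rfl⟩
  obtain ⟨g, hgv, rfl⟩ := lift_mem_support hg
  obtain ⟨h, hhv, rfl⟩ := lift_mem_support hh
  rw [← map_inv, ← map_mul]
  exact H.subtype.isOfFinOrder (isOfFinOrder_mul_inv_of_coeff_ne_zero hv hgv hhv)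

end FCTorsion

lemma isCutGroup_iff {G : Type*} [Group G] :
    IsCutGroup G ↔ ∀ u : ℤ[G]ˣ, (u : ℤ[G]) ∈ Subring.center ℤ[G] →
      ∃ (g : G) (ε : ℤˣ), (u : ℤ[G]) = single g (ε : ℤ) := by
  refine forall₂_congr fun u _ => exists_congr fun g => ?_
  constructor
  · rintro (h | h)
    · exact ⟨1, by rw [h, of_apply, Units.val_one]⟩
    · exact ⟨-1, by rw [h, of_apply, Units.val_neg, Units.val_one, single_neg]⟩
  · rintro ⟨ε, h⟩
    rcases Int.units_eq_one_or ε with rfl | rfl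
    · exact .inl (by rw [h, of_apply, Units.val_one])
    · exact .inr (by rw [h, of_apply, Units.val_neg, Units.val_one, single_neg])

end GroupRing

/-- If `G` is a normal subgroup of `Γ` such that `Γ ⧸ G` is a cut-group and
`G ∩ Φ⁺(Γ) = {1}`, then `Γ` is a cut-group. -/
theorem isCutGroup_of_quotient_isCutGroup {Γ : Type*} [Group Γ] (G : Subgroup Γ) [G.Normal]
    (hQ : IsCutGroup (Γ ⧸ G))
    (hfc : ∀ g : Γ, g ∈ G → g ∈ FCTorsion Γ → g = 1) :
    IsCutGroup Γ := by
  rw [GroupRing.isCutGroup_iff] at hQ ⊢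
  intro u hu
  have hinj : Set.InjOn (QuotientGroup.mk' G) (u : ℤ[Γ]).coeff.support := by
    intro g hg h hh hgh
    have hmem : g * h⁻¹ ∈ G := by
      rw [← QuotientGroup.ker_mk' G, MonoidHom.mem_ker, map_mul, map_inv, hgh, mul_inv_cancel]
    exact mul_inv_eq_one.mp <| hfc _ hmem <| GroupRing.mul_inv_mem_FCTorsion hu
      (Finsupp.mem_support_iff.mp hg) (Finsupp.mem_support_iff.mp hh)
  let π := mapDomainRingHom ℤ (QuotientGroup.mk' G)
  have hπ : Function.Surjective π :=
    GroupRing.mapDomain_surjective (QuotientGroup.mk'_surjective G)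
  obtain ⟨q, ε, hq⟩ := hQ (Units.map (π : ℤ[Γ] →* ℤ[Γ ⧸ G]) u)
    (GroupRing.map_mem_center_of_surjective hπ hu)
  obtain ⟨g, hg⟩ := GroupRing.exists_eq_single_of_mapDomain_eq_single hinj ε.ne_zero hq
  exact ⟨g, ε, hg⟩
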